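/- arXiv:1511.05673 — 2 statements merged into one kernel-verified Lean document; each statement's English description precedes it below -/
import Mathlib

section
/- Let n ≥ 2, let G = ℝⁿ \ {0}, let x ∈ G and r ∈ (0,1). Then the ball B_s(x,r) = {y ∈ ℝⁿ \ {0} : |x−y|/(|x|+|y|) < r} is a convex subset of ℝⁿ if and only if r ≤ 1/2. -/
/-!
Squaring `s(x, y) < r` and completing the square in `‖y‖` shows that, for `0 ≤ r < 1`, the ball is
cut out by `((1 - r²)‖y‖ - r²‖x‖)² - 2(1 - r²)⟪x, y⟫ < -(1 - 2r²)‖x‖²`.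

If `r ≤ 1/2`, this inequality confines `y` to the half-space `r²‖x‖² < (1 - r²)⟪x, y⟫`, on which
`(1 - r²)‖y‖ - r²‖x‖` is nonnegative; the left-hand side is therefore convex there.

If `1/2 < r < 1`, the point `c x` with `c = (1 - r) / (1 + r)` satisfies `s(x, c x) = r`, while
moving orthogonally to `x` until the square vanishes decreases the left-hand side. So `c x` is the
midpoint of two points of the ball without belonging to it. If `r ≥ 1`, the puncture `0` plays this
role.
-/

open scoped InnerProductSpace

theorem convexOn_sq_mul_norm_sub {E : Type*} [SeminormedAddCommGroup E] [NormedSpace ℝ E]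
    {S : Set E} {k d : ℝ} (hS : Convex ℝ S) (hk : 0 ≤ k) (hd : ∀ y ∈ S, d ≤ k * ‖y‖) :
    ConvexOn ℝ S fun y ↦ (k * ‖y‖ - d) ^ 2 := by
  have hbase : ConvexOn ℝ S fun y ↦ k * ‖y‖ - d :=
    ((convexOn_norm hS).smul hk).sub (concaveOn_const d hS)
  exact hbase.pow (fun y hy ↦ sub_nonneg.mpr (hd y hy)) 2

section NormedAddCommGroup

variable {E : Type*} [NormedAddCommGroup E]

/-- The triangular ratio metric `s(x, y)` of the punctured space `E \ {0}`, extended to all of `E`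
by the same formula; at `x = y = 0` it takes the junk value `0 / 0 = 0`. -/
noncomputable def triangularRatio (x y : E) : ℝ :=
  dist x y / (‖x‖ + ‖y‖)

/-- The open ball `B_s(x, r)` of the triangular ratio metric of `E \ {0}`, as a subset of `E`. -/
def triangularRatioBall (x : E) (r : ℝ) : Set E :=
  {y | y ≠ 0 ∧ triangularRatio x y < r}

theorem triangularRatio_nonneg (x y : E) : 0 ≤ triangularRatio x y := by
  unfold triangularRatio
  positivity

theorem triangularRatioBall_eq_empty (x : E) {r : ℝ} (hr : r ≤ 0) :
    triangularRatioBall x r = ∅ :=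
  Set.eq_empty_of_forall_notMem fun y hy ↦ (hr.trans (triangularRatio_nonneg x y)).not_gt hy.2

variable [NormedSpace ℝ E] {x : E}

theorem triangularRatio_smul_self (hx : x ≠ 0) {c : ℝ} (hc : 0 ≤ c) :
    triangularRatio x (c • x) = |1 - c| / (1 + c) := by
  have hdist : dist x (c • x) = |1 - c| * ‖x‖ := by
    rw [dist_eq_norm, ← Real.norm_eq_abs, ← norm_smul, sub_smul, one_smul]
  have hsum : ‖x‖ + ‖c • x‖ = (1 + c) * ‖x‖ := by
    rw [norm_smul, Real.norm_of_nonneg hc]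
    ring
  rw [triangularRatio, hdist, hsum, mul_div_mul_right _ _ (norm_ne_zero_iff.mpr hx)]

theorem triangularRatio_one_sub_div_one_add_smul_self (hx : x ≠ 0) {r : ℝ} (hr₀ : 0 ≤ r)
    (hr₁ : r ≤ 1) : triangularRatio x (((1 - r) / (1 + r)) • x) = r := by
  have hc : 0 ≤ (1 - r) / (1 + r) := div_nonneg (by linarith) (by linarith)
  have hsub : 1 - (1 - r) / (1 + r) = 2 * r / (1 + r) := by
    field_simp
    ring
  rw [triangularRatio_smul_self hx hc, hsub, abs_of_nonneg (by positivity)]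
  field_simp
  ring

end NormedAddCommGroup

section InnerProductSpace

variable {E : Type*} [NormedAddCommGroup E] [InnerProductSpace ℝ E] {x y : E} {r : ℝ}

theorem exists_inner_eq_zero_norm_eq (hE : 1 < Module.rank ℝ E) (x : E) {a : ℝ} (ha : 0 ≤ a) :
    ∃ v : E, ⟪x, v⟫_ℝ = 0 ∧ ‖v‖ = a := by
  have hspan : (ℝ ∙ x) ≠ ⊤ := fun htop ↦ by
    have hrank : Module.rank ℝ (ℝ ∙ x) ≤ 1 := (rank_span_le {x}).trans_eq (Cardinal.mk_singleton x)
    rw [htop, rank_top] at hrank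
    exact hrank.not_gt hE
  have : Nontrivial (ℝ ∙ x)ᗮ :=
    Submodule.nontrivial_iff_ne_bot.mpr (mt Submodule.orthogonal_eq_bot_iff.mp hspan)
  obtain ⟨v, hv⟩ := exists_norm_eq (ℝ ∙ x)ᗮ ha
  exact ⟨v, Submodule.mem_orthogonal_singleton_iff_inner_right.mp v.2, hv⟩

theorem smul_mem_of_convex_of_forall_inner_eq_norm_eq (hE : 1 < Module.rank ℝ E) {S : Set E}
    (hS : Convex ℝ S) {c ρ : ℝ} (hρ : ‖c • x‖ ≤ ρ)
    (hmem : ∀ y, ⟪x, y⟫_ℝ = c * ‖x‖ ^ 2 → ‖y‖ = ρ → y ∈ S) : c • x ∈ S := by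
  have hsq : 0 ≤ ρ ^ 2 - ‖c • x‖ ^ 2 := sub_nonneg.mpr (by gcongr)
  obtain ⟨v, hxv, hv⟩ := exists_inner_eq_zero_norm_eq hE x (Real.sqrt_nonneg (ρ ^ 2 - ‖c • x‖ ^ 2))
  have hoffset : ∀ w, ⟪x, w⟫_ℝ = 0 → ‖w‖ = ‖v‖ → c • x + w ∈ S := fun w hxw hw ↦ by
    refine hmem _ ?_ ?_
    · rw [inner_add_right, inner_smul_right, real_inner_self_eq_norm_sq, hxw, add_zero]
    · rw [← sq_eq_sq₀ (norm_nonneg _) ((norm_nonneg _).trans hρ), norm_add_sq_real,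
        real_inner_smul_left, hxw, hw, hv, Real.sq_sqrt hsq]
      ring
  have hmid := hS.midpoint_mem (hoffset v hxv rfl)
    (hoffset (-v) (by rw [inner_neg_right, hxv, neg_zero]) (norm_neg v))
  rwa [← sub_eq_add_neg, midpoint_add_sub] at hmid

theorem triangularRatio_lt_iff_inner (hx : x ≠ 0) (hr : 0 ≤ r) :
    triangularRatio x y < r ↔
      (1 - r ^ 2) * (‖x‖ ^ 2 + ‖y‖ ^ 2) - 2 * r ^ 2 * ‖x‖ * ‖y‖ < 2 * ⟪x, y⟫_ℝ := by
  have hpos : 0 < ‖x‖ + ‖y‖ := add_pos_of_pos_of_nonneg (norm_pos_iff.mpr hx) (norm_nonneg y)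
  rw [triangularRatio, div_lt_iff₀ hpos, dist_eq_norm,
    ← sq_lt_sq₀ (norm_nonneg _) (by positivity), norm_sub_sq_real]
  constructor <;> intro h <;> linarith

theorem triangularRatio_lt_iff_sq_sub_inner (hx : x ≠ 0) (hr₀ : 0 ≤ r) (hr₁ : r < 1) :
    triangularRatio x y < r ↔
      ((1 - r ^ 2) * ‖y‖ - r ^ 2 * ‖x‖) ^ 2 - 2 * (1 - r ^ 2) * ⟪x, y⟫_ℝ
        < -((1 - 2 * r ^ 2) * ‖x‖ ^ 2) := by
  have hK : 0 < 1 - r ^ 2 := sub_pos.mpr (pow_lt_one₀ hr₀ hr₁ two_ne_zero)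
  rw [triangularRatio_lt_iff_inner hx hr₀, ← mul_lt_mul_iff_right₀ hK]
  constructor <;> intro h <;> linarith

theorem lt_inner_of_triangularRatio_lt (hx : x ≠ 0) (hr₀ : 0 ≤ r) (hr : r ≤ 1 / 2)
    (h : triangularRatio x y < r) : r ^ 2 * ‖x‖ ^ 2 < (1 - r ^ 2) * ⟪x, y⟫_ℝ := by
  rw [triangularRatio_lt_iff_sq_sub_inner hx hr₀ (by linarith)] at h
  have hcoef : 2 * r ^ 2 ≤ 1 - 2 * r ^ 2 := by nlinarith
  have := mul_le_mul_of_nonneg_right hcoef (sq_nonneg ‖x‖)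
  linarith [sq_nonneg ((1 - r ^ 2) * ‖y‖ - r ^ 2 * ‖x‖)]

theorem mul_norm_le_of_mul_norm_sq_le_inner (hx : x ≠ 0) {k d : ℝ} (hk : 0 ≤ k)
    (h : d * ‖x‖ ^ 2 ≤ k * ⟪x, y⟫_ℝ) : d * ‖x‖ ≤ k * ‖y‖ := by
  refine le_of_mul_le_mul_right ?_ (norm_pos_iff.mpr hx)
  calc d * ‖x‖ * ‖x‖ = d * ‖x‖ ^ 2 := by ring
    _ ≤ k * ⟪x, y⟫_ℝ := h
    _ ≤ k * (‖x‖ * ‖y‖) := by gcongr; exact real_inner_le_norm x y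
    _ = k * ‖y‖ * ‖x‖ := by ring

theorem convex_triangularRatioBall (hx : x ≠ 0) (hr : r ≤ 1 / 2) :
    Convex ℝ (triangularRatioBall x r) := by
  rcases le_or_gt r 0 with hr₀ | hr₀
  · rw [triangularRatioBall_eq_empty x hr₀]
    exact convex_empty
  have hK : 0 ≤ 1 - r ^ 2 := by nlinarith
  let H : Set E := {y | r ^ 2 * ‖x‖ ^ 2 < ((1 - r ^ 2) • innerₛₗ ℝ x) y}
  let g : E → ℝ := fun y ↦
    ((1 - r ^ 2) * ‖y‖ - r ^ 2 * ‖x‖) ^ 2 - ((2 * (1 - r ^ 2)) • innerₛₗ ℝ x) y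
  have hH : Convex ℝ H := convex_halfSpace_gt (LinearMap.isLinear _) _
  have hg : ConvexOn ℝ H g :=
    (convexOn_sq_mul_norm_sub hH hK fun _ hy ↦
      mul_norm_le_of_mul_norm_sq_le_inner hx hK (le_of_lt hy)).sub (LinearMap.concaveOn _ hH)
  have hball : triangularRatioBall x r = {y ∈ H | g y < -((1 - 2 * r ^ 2) * ‖x‖ ^ 2)} := by
    ext y
    have hiff := triangularRatio_lt_iff_sq_sub_inner (y := y) hx hr₀.le (by linarith)
    refine ⟨fun hy ↦ ⟨lt_inner_of_triangularRatio_lt hx hr₀.le hr hy.2, hiff.mp hy.2⟩,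
      fun hy ↦ ⟨?_, hiff.mpr hy.2⟩⟩
    rintro rfl
    have hzero : r ^ 2 * ‖x‖ ^ 2 < 0 := hy.1.trans_eq (map_zero _)
    exact hzero.not_ge (by positivity)
  rw [hball]
  exact hg.convex_lt _

theorem not_convex_triangularRatioBall_of_one_le (hE : 1 < Module.rank ℝ E) (hx : x ≠ 0)
    (hr : 1 ≤ r) : ¬Convex ℝ (triangularRatioBall x r) := by
  intro hconv
  have hpos : 0 < ‖x‖ := norm_pos_iff.mpr hx
  have hmem : (0 : ℝ) • x ∈ triangularRatioBall x r := by
    refine smul_mem_of_convex_of_forall_inner_eq_norm_eq hE hconv (ρ := ‖x‖) (by simp)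
      fun y hxy hy ↦ ⟨norm_pos_iff.mp (hy ▸ hpos), ?_⟩
    have hlt : triangularRatio x y < 1 := by
      rw [triangularRatio_lt_iff_inner hx zero_le_one, hxy, hy]
      linarith [mul_pos hpos hpos]
    exact hlt.trans_le hr
  exact hmem.1 (zero_smul ℝ x)

theorem triangularRatio_lt_of_inner_eq_of_norm_eq (hx : x ≠ 0) (hr₀ : 0 ≤ r) (hr₁ : r < 1)
    (hr : r ≠ 1 / 2) (hinner : (1 - r ^ 2) * ⟪x, y⟫_ℝ = (1 - r) ^ 2 * ‖x‖ ^ 2)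
    (hnorm : (1 - r ^ 2) * ‖y‖ = r ^ 2 * ‖x‖) : triangularRatio x y < r := by
  rw [triangularRatio_lt_iff_sq_sub_inner hx hr₀ hr₁, hnorm, mul_assoc 2, hinner]
  have hgap : 0 < ((2 * r - 1) * ‖x‖) ^ 2 :=
    sq_pos_of_ne_zero (mul_ne_zero (fun h ↦ hr (by linarith)) (norm_ne_zero_iff.mpr hx))
  linarith

theorem not_convex_triangularRatioBall_of_lt_one (hE : 1 < Module.rank ℝ E) (hx : x ≠ 0)
    (hr : 1 / 2 < r) (hr₁ : r < 1) : ¬Convex ℝ (triangularRatioBall x r) := by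
  intro hconv
  have hpos : 0 < ‖x‖ := norm_pos_iff.mpr hx
  have hr₀ : 0 < r := by linarith
  have hK : 0 < 1 - r ^ 2 := sub_pos.mpr (pow_lt_one₀ hr₀.le hr₁ two_ne_zero)
  have hKc : (1 - r ^ 2) * ((1 - r) / (1 + r)) = (1 - r) ^ 2 := by
    field_simp
    ring
  have hnorm : ‖((1 - r) / (1 + r)) • x‖ ≤ r ^ 2 / (1 - r ^ 2) * ‖x‖ := by
    have hle : (1 - r) / (1 + r) ≤ r ^ 2 / (1 - r ^ 2) := by
      rw [le_div_iff₀' hK, hKc]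
      exact pow_le_pow_left₀ (by linarith) (by linarith) 2
    rw [norm_smul, Real.norm_of_nonneg (div_nonneg (by linarith) (by linarith))]
    exact mul_le_mul_of_nonneg_right hle hpos.le
  have hmem : ((1 - r) / (1 + r)) • x ∈ triangularRatioBall x r := by
    refine smul_mem_of_convex_of_forall_inner_eq_norm_eq hE hconv hnorm fun y hxy hy ↦ ⟨?_, ?_⟩
    · rw [← norm_pos_iff, hy]
      positivity
    · refine triangularRatio_lt_of_inner_eq_of_norm_eq hx hr₀.le hr₁ hr.ne' ?_ ?_
      · rw [hxy, ← mul_assoc, hKc]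
      · rw [hy, ← mul_assoc, mul_div_cancel₀ _ hK.ne']
  exact hmem.2.ne (triangularRatio_one_sub_div_one_add_smul_self hx hr₀.le hr₁.le)

theorem stmt_4_general (hE : 1 < Module.rank ℝ E) (hx : x ≠ 0) (r : ℝ) :
    Convex ℝ (triangularRatioBall x r) ↔ r ≤ 1 / 2 := by
  refine ⟨fun hconv ↦ ?_, convex_triangularRatioBall hx⟩
  by_contra! hr
  rcases lt_or_ge r 1 with hr₁ | hr₁
  · exact not_convex_triangularRatioBall_of_lt_one hE hx hr hr₁ hconv
  · exact not_convex_triangularRatioBall_of_one_le hE hx hr₁ hconv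

end InnerProductSpace

theorem stmt_4 (n : ℕ) (hn : 2 ≤ n) (x : EuclideanSpace ℝ (Fin n)) (hx : x ≠ 0)
    (r : ℝ) (hr : r ∈ Set.Ioo (0:ℝ) 1) :
    Convex ℝ {y : EuclideanSpace ℝ (Fin n) | y ≠ 0 ∧ dist x y / (‖x‖ + ‖y‖) < r}
      ↔ r ≤ 1/2 :=
  stmt_4_general (Module.one_lt_rank_of_one_lt_finrank (by rwa [finrank_euclideanSpace_fin])) hx r
end

section
/- Let n ≥ 2, x ∈ ℝⁿ \ {0} and r ∈ (0,π]. For every y ∈ ℝⁿ \ {0} with ∠(x,0,y) = r one has log(1 + |x−y|/min(|x|,|y|)) ≥ log(1 + 2 sin(r/2)), with equality when |y| = |x|. Hence the radius log(1 + 2 sin(r/2)) in the inclusion B_j(x, log(1+2 sin(r/2))) ⊂ B_v(x,r) is best possible. -/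
/-! The law of cosines with `cos θ = 1 - 2 sin² (θ / 2)`, where `θ = ∠ x p y`, reads
`|x - y|² = (|x - p| - |y - p|)² + 4 |x - p| |y - p| sin² (θ / 2)`.
Dropping the first square and replacing both `|x - p|` and `|y - p|` by their minimum bounds
`|x - y|` from below, and nothing is lost when `|x - p| = |y - p|`. -/

section HalfAngle

open EuclideanGeometry

variable {V P : Type*} [NormedAddCommGroup V] [InnerProductSpace ℝ V] [MetricSpace P]
  [NormedAddTorsor V P]

theorem sin_half_angle_nonneg (x p y : P) : 0 ≤ Real.sin (∠ x p y / 2) :=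
  Real.sin_nonneg_of_nonneg_of_le_pi (by linarith [angle_nonneg x p y])
    (by linarith [angle_le_pi x p y, Real.pi_pos])

theorem dist_sq_eq_dist_sub_dist_sq_add_sin_half_angle_sq (x p y : P) :
    dist x y ^ 2 =
      (dist x p - dist y p) ^ 2 + 4 * (dist x p * dist y p) * Real.sin (∠ x p y / 2) ^ 2 := by
  have cos_angle : Real.cos (∠ x p y) = 1 - 2 * Real.sin (∠ x p y / 2) ^ 2 := by
    rw [← Real.cos_two_mul_eq_one_sub, mul_div_cancel₀ _ two_ne_zero]
  have cosines := law_cos x p y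
  rw [cos_angle] at cosines
  linarith

theorem two_mul_sin_half_angle_mul_min_le_dist (x p y : P) :
    2 * Real.sin (∠ x p y / 2) * min (dist x p) (dist y p) ≤ dist x y := by
  set m := min (dist x p) (dist y p)
  have m_sq_le : m ^ 2 ≤ dist x p * dist y p := by
    rw [sq]
    exact mul_le_mul (min_le_left _ _) (min_le_right _ _) (by positivity) dist_nonneg
  refine le_of_sq_le_sq ?_ dist_nonneg
  calc (2 * Real.sin (∠ x p y / 2) * m) ^ 2
      = 4 * m ^ 2 * Real.sin (∠ x p y / 2) ^ 2 := by ring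
    _ ≤ 4 * (dist x p * dist y p) * Real.sin (∠ x p y / 2) ^ 2 := by gcongr
    _ ≤ (dist x p - dist y p) ^ 2 + 4 * (dist x p * dist y p) * Real.sin (∠ x p y / 2) ^ 2 :=
      le_add_of_nonneg_left (sq_nonneg _)
    _ = dist x y ^ 2 := (dist_sq_eq_dist_sub_dist_sq_add_sin_half_angle_sq x p y).symm

theorem dist_eq_two_mul_sin_half_angle_mul_dist {x p y : P} (h : dist y p = dist x p) :
    dist x y = 2 * Real.sin (∠ x p y / 2) * dist x p := by
  have sin_nonneg := sin_half_angle_nonneg x p y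
  rw [← sq_eq_sq₀ dist_nonneg (by positivity),
    dist_sq_eq_dist_sub_dist_sq_add_sin_half_angle_sq x p y, h]
  ring

theorem stmt_10_general {x p y : P} (hx : x ≠ p) (hy : y ≠ p) :
    Real.log (1 + 2 * Real.sin (∠ x p y / 2)) ≤
        Real.log (1 + dist x y / min (dist x p) (dist y p)) ∧
      (dist y p = dist x p →
        Real.log (1 + dist x y / min (dist x p) (dist y p)) =
          Real.log (1 + 2 * Real.sin (∠ x p y / 2))) := by
  have dist_pos_x : 0 < dist x p := dist_pos.mpr hx
  have min_pos : 0 < min (dist x p) (dist y p) := lt_min dist_pos_x (dist_pos.mpr hy)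
  have sin_nonneg := sin_half_angle_nonneg x p y
  constructor
  · gcongr
    exact (le_div_iff₀ min_pos).mpr (two_mul_sin_half_angle_mul_min_le_dist x p y)
  · intro h
    rw [h, min_self, dist_eq_two_mul_sin_half_angle_mul_dist h,
      mul_div_cancel_right₀ _ dist_pos_x.ne']

end HalfAngle

theorem stmt_10 (n : ℕ) (hn : 2 ≤ n) (x : EuclideanSpace ℝ (Fin n)) (hx : x ≠ 0)
    (r : ℝ) (hr : r ∈ Set.Ioc (0:ℝ) Real.pi)
    (y : EuclideanSpace ℝ (Fin n)) (hy : y ≠ 0)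
    (hangle : EuclideanGeometry.angle x 0 y = r) :
    Real.log (1 + 2 * Real.sin (r / 2)) ≤ Real.log (1 + dist x y / min ‖x‖ ‖y‖) ∧
      (‖y‖ = ‖x‖ →
        Real.log (1 + dist x y / min ‖x‖ ‖y‖) = Real.log (1 + 2 * Real.sin (r / 2))) := by
  simpa only [hangle, dist_zero_right] using stmt_10_general hx hy
end
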